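/- arXiv:2205.12099 — 3 statements merged into one kernel-verified Lean document; each statement's English description precedes it below -/
import Mathlib

section
/- There exists a smooth function g : (0,∞) → ℝ with g ≤ 0 everywhere, g(u) = 0 for all u ∈ (0,1/4), and g(u) = −u² for all u ∈ (1/3,∞), such that: for every initial value u₀ ∈ (0,∞) the solution u(t) of the ODE u'(t) = g(u(t)), u(0) = u₀, exists and stays in (0,∞) for all t ∈ [0,1], and the time-one map u₀ ↦ u(1) maps (0,∞) onto the open interval (0,1). -/
/-!
In the coordinate `w = 1/u` the equation `u' = -u²` becomes `w' = 1`. Take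
`g(u) = -u² h(1/u)` with `h(w) = S(4 - w)`, where `S` is the standard smooth transition from `0`
to `1`. Thus `h = 1` for `w ≤ 3`, `h = 0` for `w ≥ 4`, `0 ≤ h ≤ 1`, and `w' = h(w)` is an equation
on all of `ℝ` whose right-hand side is bounded and Lipschitz. Its solutions exist on `[0,1]` with
prescribed value at either endpoint (`exists_curve`), and they are unique. It remains to see that
the time-one map of `w' = h(w)` sends `(0,∞)` onto `(1,∞)`.

* A solution is nondecreasing. If `w(1) ≤ 1`, then `w ≤ 1` throughout, so `w' = 1` throughout and
  `w(1) = w(0) + 1 > 1`, a contradiction. So the image lies in `(1,∞)`.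
* Given `y > 1`, the solution with `w(1) = y` has `w(0) ≥ y - 1 > 0`, because `w' ≤ 1`.
-/

open Set

/-- The right-hand side `h` of the equation `w' = h(w)` in the coordinate `w = 1/u`. -/
noncomputable def invField (w : ℝ) : ℝ := Real.smoothTransition (4 - w)

lemma invField_nonneg (w : ℝ) : 0 ≤ invField w := Real.smoothTransition.nonneg _

lemma invField_le_one (w : ℝ) : invField w ≤ 1 := Real.smoothTransition.le_one _

lemma invField_eq_one {w : ℝ} (hw : w ≤ 3) : invField w = 1 :=
  Real.smoothTransition.one_of_one_le (by linarith)

lemma invField_eq_zero {w : ℝ} (hw : 4 ≤ w) : invField w = 0 :=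
  Real.smoothTransition.zero_of_nonpos (by linarith)

/-- The smooth transition is `C¹`, hence Lipschitz on `[0,1]`, and it factors through the
`1`-Lipschitz projection onto `[0,1]`. -/
lemma exists_lipschitzWith_invField : ∃ K, LipschitzWith K invField := by
  obtain ⟨K, hK⟩ : ∃ K, LipschitzOnWith K Real.smoothTransition (Icc (0 : ℝ) 1) :=
    (Real.smoothTransition.contDiff (n := 1)).contDiffOn.exists_lipschitzOnWith
      (by norm_num) (convex_Icc 0 1) isCompact_Icc
  refine ⟨K, LipschitzWith.of_dist_le_mul fun x y => ?_⟩
  unfold invField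
  rw [← Real.smoothTransition.projIcc (x := 4 - x), ← Real.smoothTransition.projIcc (x := 4 - y)]
  refine (hK.dist_le_mul _ (Subtype.prop _) _ (Subtype.prop _)).trans ?_
  have h := (LipschitzWith.projIcc (zero_le_one (α := ℝ))).dist_le_mul (4 - x) (4 - y)
  rw [Subtype.dist_eq] at h
  have h' : dist (4 - x) (4 - y) = dist x y := dist_sub_left 4 x y
  rw [h', NNReal.coe_one, one_mul] at h
  gcongr

/-- `W` solves `w' = h(w)` on the time interval `[0,1]`. -/
def IsInvCurve (W : ℝ → ℝ) : Prop :=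
  ∀ t ∈ Icc (0 : ℝ) 1, HasDerivWithinAt W (invField (W t)) (Icc 0 1) t

/-- Picard–Lindelöf on a ball of radius `1`; since `|h| ≤ 1`, the whole interval `[0,1]` is
reached. The value may be prescribed at any time `t₀`, in particular at `0` or at `1`. -/
lemma exists_curve (t₀ : Icc (0 : ℝ) 1) (y : ℝ) : ∃ W : ℝ → ℝ, W t₀ = y ∧ IsInvCurve W := by
  obtain ⟨K, hK⟩ := exists_lipschitzWith_invField
  have hPL : IsPicardLindelof (fun _ => invField) t₀ y 1 0 1 K := by
    refine IsPicardLindelof.of_time_independent (fun x _ => ?_) hK.lipschitzOnWith ?_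
    · rw [Real.norm_of_nonneg (invField_nonneg x)]
      exact invField_le_one x
    · have h0 := t₀.2.1
      have h1 := t₀.2.2
      simp only [NNReal.coe_one, NNReal.coe_zero, one_mul, sub_zero]
      exact max_le (by linarith) h1
  exact hPL.exists_eq_forall_mem_Icc_hasDerivWithinAt₀

namespace IsInvCurve

variable {W V : ℝ → ℝ}

lemma continuousOn (hW : IsInvCurve W) : ContinuousOn W (Icc 0 1) :=
  fun t ht => (hW t ht).continuousWithinAt

lemma hasDerivWithinAt_Ici (hW : IsInvCurve W) :
    ∀ t ∈ Ico (0 : ℝ) 1, HasDerivWithinAt W (invField (W t)) (Ici t) t :=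
  fun t ht => (hW t ⟨ht.1, ht.2.le⟩).mono_of_mem_nhdsWithin (Icc_mem_nhdsGE_of_mem ht)

lemma eqOn (hW : IsInvCurve W) (hV : IsInvCurve V) (h : W 0 = V 0) : EqOn W V (Icc 0 1) := by
  obtain ⟨K, hK⟩ := exists_lipschitzWith_invField
  exact ODE_solution_unique (v := fun _ => invField) (fun _ => hK) hW.continuousOn
    hW.hasDerivWithinAt_Ici hV.continuousOn hV.hasDerivWithinAt_Ici h

lemma monotoneOn (hW : IsInvCurve W) : MonotoneOn W (Icc 0 1) :=
  monotoneOn_of_hasDerivWithinAt_nonneg (convex_Icc 0 1) hW.continuousOn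
    (fun t ht => (hW t (interior_subset ht)).mono interior_subset)
    (fun _ _ => invField_nonneg _)

lemma one_le (hW : IsInvCurve W) : W 1 ≤ W 0 + 1 :=
  image_le_of_deriv_right_le_deriv_boundary (B := fun t => W 0 + t) (B' := fun _ => 1)
    hW.continuousOn hW.hasDerivWithinAt_Ici (by simp) (by fun_prop)
    (fun t _ => ((hasDerivAt_id t).const_add (W 0)).hasDerivWithinAt)
    (fun _ _ => invField_le_one _) (right_mem_Icc.2 zero_le_one)

lemma one_lt (hW : IsInvCurve W) (h0 : 0 < W 0) : 1 < W 1 := by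
  by_contra! h
  have key : W 0 + 1 ≤ W 1 :=
    image_le_of_deriv_right_le_deriv_boundary (f := fun t => W 0 + t) (f' := fun _ => 1)
      (by fun_prop) (fun t _ => ((hasDerivAt_id t).const_add (W 0)).hasDerivWithinAt)
      (by simp) hW.continuousOn hW.hasDerivWithinAt_Ici
      (fun t ht => by
        have := hW.monotoneOn ⟨ht.1, ht.2.le⟩ (right_mem_Icc.2 zero_le_one) ht.2.le
        exact (invField_eq_one (by linarith)).ge)
      (right_mem_Icc.2 zero_le_one)
  linarith

end IsInvCurve

/-- **Lemma.** There is a smooth non-positive function `g` on `(0,∞)` with `g = 0` on `(0,1/4)`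
and `g(u) = -u²` on `(1/3,∞)` such that for every `u₀ ∈ (0,∞)` the solution of
`u' = g(u)`, `u(0) = u₀` exists and stays in `(0,∞)` on `[0,1]`, and the time-one map
`u₀ ↦ u(1)` maps `(0,∞)` onto `(0,1)`. -/
theorem exists_nonpos_field_time_one_onto_Ioo :
    ∃ g : ℝ → ℝ,
      ContDiffOn ℝ (⊤ : ℕ∞) g (Set.Ioi (0 : ℝ)) ∧
      (∀ u ∈ Set.Ioi (0 : ℝ), g u ≤ 0) ∧
      (∀ u ∈ Set.Ioo (0 : ℝ) (1 / 4 : ℝ), g u = 0) ∧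
      (∀ u ∈ Set.Ioi (1 / 3 : ℝ), g u = -u ^ 2) ∧
      ∃ sol : ℝ → ℝ → ℝ,
        (∀ u₀ ∈ Set.Ioi (0 : ℝ),
          sol u₀ 0 = u₀ ∧
          ∀ t ∈ Set.Icc (0 : ℝ) 1,
            sol u₀ t ∈ Set.Ioi (0 : ℝ) ∧
            HasDerivWithinAt (sol u₀) (g (sol u₀ t)) (Set.Icc (0 : ℝ) 1) t) ∧
        (fun u₀ => sol u₀ 1) '' Set.Ioi (0 : ℝ) = Set.Ioo (0 : ℝ) 1 := by
  choose W hW0 hW using exists_curve ⟨0, left_mem_Icc.2 zero_le_one⟩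
  have hpos : ∀ y : ℝ, 0 < y → ∀ t ∈ Icc (0 : ℝ) 1, 0 < W y t := fun y hy t ht => by
    have := (hW y).monotoneOn (left_mem_Icc.2 zero_le_one) ht ht.1
    rw [hW0] at this
    linarith
  refine ⟨fun u => -u ^ 2 * invField u⁻¹, ?_, ?_, ?_, ?_, fun u₀ t => (W u₀⁻¹ t)⁻¹, ?_, ?_⟩
  · refine (contDiff_id.pow 2).neg.contDiffOn.mul ?_
    exact Real.smoothTransition.contDiff.comp_contDiffOn
      (contDiffOn_const.sub (contDiffOn_id.inv fun u hu => (ne_of_gt hu : u ≠ 0)))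
  · intro u _
    have := mul_nonneg (sq_nonneg u) (invField_nonneg u⁻¹)
    simp only
    linarith
  · rintro u ⟨h0, h1⟩
    have : 4 ≤ u⁻¹ := by
      rw [le_inv_comm₀ (by norm_num) h0]
      linarith
    simp [invField_eq_zero this]
  · intro u hu
    rw [mem_Ioi] at hu
    have : u⁻¹ ≤ 3 := by
      rw [inv_le_comm₀ (by linarith) (by norm_num)]
      linarith
    simp [invField_eq_one this]
  · intro u₀ hu₀
    refine ⟨by simp [hW0], fun t ht => ?_⟩
    have hp := hpos _ (inv_pos.2 hu₀) t ht
    refine ⟨inv_pos.2 hp, ?_⟩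
    have hg : -(W u₀⁻¹ t)⁻¹ ^ 2 * invField (W u₀⁻¹ t)⁻¹⁻¹ =
        -invField (W u₀⁻¹ t) / W u₀⁻¹ t ^ 2 := by
      rw [inv_inv]
      field_simp
    simp only [hg]
    exact (hW u₀⁻¹ t ht).inv hp.ne'
  · ext v
    constructor
    · rintro ⟨u₀, hu₀, rfl⟩
      have h := (hW u₀⁻¹).one_lt (by rw [hW0]; exact inv_pos.2 hu₀)
      exact ⟨inv_pos.2 (by linarith), inv_lt_one_of_one_lt₀ h⟩
    · rintro ⟨h0, h1⟩
      obtain ⟨V, hV1, hV⟩ := exists_curve ⟨1, right_mem_Icc.2 zero_le_one⟩ v⁻¹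
      have hv : 1 < v⁻¹ := (one_lt_inv₀ h0).2 h1
      have hV1' : V 1 = v⁻¹ := hV1
      have hle := hV.one_le
      have hV0 : 0 < V 0 := by linarith
      refine ⟨(V 0)⁻¹, inv_pos.2 hV0, ?_⟩
      have := (hW (V 0)).eqOn hV (hW0 (V 0)) (right_mem_Icc.2 zero_le_one)
      simp only [inv_inv]
      rw [this, hV1', inv_inv]
end

section
/- Let m, n ≥ 1 and let 0 < c < a and 0 < d < b be real numbers. In ℝᵐ × ℝⁿ, set A = (B_a × B'_b) ∖ ({0} × (B'_b ∖ B'_d)) and A' = A ∖ (C̄_c × S'_d), where B_r (resp. C̄_r) denotes the open (resp. closed) ball of radius r centered at the origin of ℝᵐ, and B'_r (resp. S'_r) denotes the open ball (resp. sphere) of radius r centered at the origin of ℝⁿ; both A and A' are open subsets of ℝᵐ × ℝⁿ. Then there exist ε > 0 and a diffeomorphism φ : A → A' (a smooth bijection between these open sets with smooth inverse) such that φ(x,y) = (x,y) whenever ‖x‖ ≥ a−ε or ‖y‖ ≥ b−ε. -/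
/-!
The map is `φ (x, y) = (q • x, y)`, which preserves `y` and rescales `x` by
`q = 1 + k y * f ‖x‖ / √(‖x‖² + (‖y‖² - d²)²)`.
Here `f` is a smooth cutoff equal to `c` near `0` and to `0` near `a`, and `k` is a smooth cutoff
equal to `1` where `‖y‖ ≤ d` and to `0` near `‖y‖ = b`.

The square root vanishes only on `{0} × S'_d`, which is part of the slit, so `φ` is smooth on `A`.
For `‖y‖ ≠ d` the radius `‖x‖ = s` is mapped to `s + k f(s) s / √(s² + w)` with `w > 0`, a bijection
of `[0, a)`. For `‖y‖ = d` it is mapped to `s + f(s)`, a bijection from `(0, a)` to `(c, a)`: this is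
exactly the removal of the tube `C̄_c × S'_d`.

Because `c < a`, the cutoff `f` can be chosen with slopes in `[-(1 - δ), 0]` for some `δ > 0`
(`exists_profile`). Then the radial map expands distances by at least the factor `δ`
(`radial_expand`), and the same holds for `x ↦ q • x` by Cauchy–Schwarz (`stretch_expand`). This one
estimate gives the injectivity of `φ` and the injectivity of its derivative; surjectivity comes from
the intermediate value theorem in the radial variable, and the inverse is smooth by the inverse
function theorem.
-/

open scoped ContDiff InnerProductSpace

/-! ### The cutoff profile -/

/-- A cutoff function descending from `c` to `0` inside `(0, a)` with slope bounded below by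
`-(1 - δ) > -1`. It is the primitive, vanishing at `a`, of the negative of a bump of integral `c`
that is flat enough to have height at most `c / (2 * rIn) < 1`. -/
lemma exists_profile {a c : ℝ} (hc : 0 < c) (hca : c < a) :
    ∃ (f : ℝ → ℝ) (δ η a₁ : ℝ), 0 < δ ∧ δ ≤ 1 ∧ 0 < η ∧ a₁ < a ∧ ContDiff ℝ ∞ f ∧
      (∀ s ≤ η, f s = c) ∧ (∀ s, a₁ ≤ s → f s = 0) ∧ (∀ s, 0 ≤ f s) ∧
      Antitone f ∧ (∀ s t, s ≤ t → f s - f t ≤ (1 - δ) * (t - s)) := by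
  let B : ContDiffBump (a / 2) :=
    { rIn := (2 * c + a) / 6
      rOut := (c + 2 * a) / 6
      rIn_pos := by linarith
      rIn_lt_rOut := by linarith }
  have hin : B.rIn = (2 * c + a) / 6 := rfl
  have hout : B.rOut = (c + 2 * a) / 6 := rfl
  let β : ℝ → ℝ := B.normed MeasureTheory.volume
  have hβc : Continuous β := B.continuous_normed
  have hβ0 : ∀ s, 0 ≤ β s := fun s => B.nonneg_normed s
  have hβs : Function.support β = Metric.ball (a / 2) B.rOut := B.support_normed_eq
  have hβz : ∀ s, a / 2 + B.rOut ≤ s → β s = 0 := by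
    intro s hs
    by_contra h
    have : s ∈ Function.support β := h
    rw [hβs, Metric.mem_ball, Real.dist_eq, abs_lt] at this
    linarith [this.2]
  have hβle : ∀ s, β s ≤ 1 / (2 * B.rIn) := by
    intro s
    have h := B.normed_le_div_measure_closedBall_rIn MeasureTheory.volume s
    rwa [Real.volume_real_closedBall B.rIn_pos.le] at h
  set f : ℝ → ℝ := fun s => -c * ∫ t in a..s, β t with hf
  have hder : ∀ s, HasDerivAt f (-c * β s) s := fun s =>
    (hβc.integral_hasStrictDerivAt a s).hasDerivAt.const_mul (-c)
  have hanti : Antitone f := antitone_of_hasDerivAt_nonpos hder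
    (fun s => by have := mul_nonneg hc.le (hβ0 s); simp only [Pi.zero_apply]; linarith)
  have hzero : ∀ s, a / 2 + B.rOut ≤ s → f s = 0 := by
    intro s hs
    have : ∫ t in a..s, β t = ∫ t in a..s, (0 : ℝ) := by
      apply intervalIntegral.integral_congr
      intro t ht
      apply hβz
      have h2 := ht.1
      refine le_trans (le_min ?_ hs) h2
      rw [hout]; linarith
    simp [hf, this]
  have hin2 : 0 < 2 * B.rIn := by have := B.rIn_pos; linarith
  have hq : c / (2 * B.rIn) < 1 := by
    rw [div_lt_one hin2, hin]; linarith
  refine ⟨f, 1 - c / (2 * B.rIn), a / 2 - B.rOut, a / 2 + B.rOut, by linarith, ?_, ?_, ?_, ?_, ?_,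
    hzero, ?_, hanti, ?_⟩
  · have : 0 ≤ c / (2 * B.rIn) := by positivity
    linarith
  · rw [hout]; linarith
  · rw [hout]; linarith
  · rw [contDiff_infty_iff_deriv]
    refine ⟨fun s => (hder s).differentiableAt, ?_⟩
    have : deriv f = fun s => -c * β s := funext fun s => (hder s).deriv
    rw [this]
    exact contDiff_const.mul (B.contDiff_normed (n := ⊤))
  · intro s hs
    have h1 : ∫ t in s..a, β t = 1 := by
      rw [intervalIntegral.integral_eq_integral_of_support_subset]
      · exact B.integral_normed
      · rw [hβs, Real.ball_eq_Ioo]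
        intro t ht
        exact ⟨lt_of_le_of_lt hs ht.1, by have := ht.2; rw [hout] at this; linarith⟩
    simp only [hf]
    rw [intervalIntegral.integral_symm, h1]; ring
  · intro s
    rw [← hzero (max s (a / 2 + B.rOut)) (le_max_right _ _)]
    exact hanti (le_max_left _ _)
  · intro s t hst
    have hmono : Monotone (fun s => f s + c / (2 * B.rIn) * s) := by
      refine monotone_of_hasDerivAt_nonneg
        (fun s => (hder s).add ((hasDerivAt_id s).const_mul (c / (2 * B.rIn)))) (fun s => ?_)
      have := mul_le_mul_of_nonneg_left (hβle s) hc.le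
      simp only [Pi.zero_apply]
      have e : c * (1 / (2 * B.rIn)) = c / (2 * B.rIn) := by ring
      linarith
    have := hmono hst
    simp only at this
    linarith

/-! ### Expansion of the radial stretch -/

/-- The factor by which a vector of norm `s` is stretched. At `s = w = 0`, where the square root
vanishes, the quotient is `0` and the factor is `1`. -/
noncomputable def stretch (f : ℝ → ℝ) (k w s : ℝ) : ℝ := 1 + k * f s / √(s ^ 2 + w)

lemma one_le_stretch {f : ℝ → ℝ} (hf : ∀ s, 0 ≤ f s) {k w : ℝ} (hk : 0 ≤ k) (s : ℝ) :
    1 ≤ stretch f k w s := by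
  have : 0 ≤ k * f s / √(s ^ 2 + w) := div_nonneg (mul_nonneg hk (hf s)) (Real.sqrt_nonneg _)
  unfold stretch; linarith

/-- For `f = 0` the derivative would be `1`; the slope bound on `f` keeps it at least `δ`, since
`s / √(s ^ 2 + w)` is increasing in `s` with values in `[0, 1]`. -/
lemma radial_expand {f : ℝ → ℝ} {δ k w s t : ℝ} (hf : ∀ s, 0 ≤ f s)
    (hanti : Antitone f) (hfδ : ∀ s t, s ≤ t → f s - f t ≤ (1 - δ) * (t - s))
    (hk : 0 ≤ k) (hk1 : k ≤ 1) (hw : 0 ≤ w) (hs : 0 ≤ s) (hst : s ≤ t) :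
    δ * (t - s) ≤ t * stretch f k w t - s * stretch f k w s := by
  set u : ℝ → ℝ := fun s => s / √(s ^ 2 + w) with hu
  have e : ∀ s, s * stretch f k w s = s + k * (f s * u s) := by
    intro s; simp only [stretch, hu]; ring
  have hus : 0 ≤ u s := div_nonneg hs (Real.sqrt_nonneg _)
  have hus1 : u s ≤ 1 := by
    apply div_le_one_of_le₀ _ (Real.sqrt_nonneg _)
    apply Real.le_sqrt_of_sq_le; linarith
  have hut : u s ≤ u t := by
    rcases hs.eq_or_lt with rfl | hs0
    · simp only [hu, zero_div]; exact div_nonneg hst (Real.sqrt_nonneg _)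
    · have ht0 : 0 < t := hs0.trans_le hst
      simp only [hu]
      rw [div_le_div_iff₀ (by positivity) (by positivity)]
      apply le_of_sq_le_sq _ (by positivity)
      rw [mul_pow, mul_pow, Real.sq_sqrt (by positivity), Real.sq_sqrt (by positivity)]
      have : s ^ 2 ≤ t ^ 2 := by gcongr
      nlinarith
  rw [e, e]
  have h1 := mul_le_mul_of_nonneg_left hut (hf t)
  have h2 : f s * u s - f t * u s ≤ f s - f t := by
    have := hanti hst
    nlinarith
  have h3 : k * (f s * u s - f t * u t) ≤ f s - f t := by
    have := hanti hst
    nlinarith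
  have := hfδ s t hst
  linarith

/-- The difference `⟪q₁ • x₁ - q₂ • x₂, x₁ - x₂⟫ - δ ‖x₁ - x₂‖²` is affine in `⟪x₁, x₂⟫` with
nonpositive slope, so by Cauchy–Schwarz the worst case is that of parallel vectors, which is the one-dimensional hypothesis `h`. -/
lemma inner_expand {E : Type*} [NormedAddCommGroup E] [InnerProductSpace ℝ E] {δ q₁ q₂ : ℝ}
    (x₁ x₂ : E) (hδ : δ ≤ 1) (h₁ : 1 ≤ q₁) (h₂ : 1 ≤ q₂)
    (h : δ * (‖x₁‖ - ‖x₂‖) ^ 2 ≤ (‖x₁‖ * q₁ - ‖x₂‖ * q₂) * (‖x₁‖ - ‖x₂‖)) :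
    δ * ‖x₁ - x₂‖ ≤ ‖q₁ • x₁ - q₂ • x₂‖ := by
  have hi := real_inner_le_norm x₁ x₂
  have key : δ * ‖x₁ - x₂‖ ^ 2 ≤ ⟪q₁ • x₁ - q₂ • x₂, x₁ - x₂⟫_ℝ := by
    rw [norm_sub_sq_real]
    simp only [inner_sub_left, inner_sub_right, real_inner_smul_left, real_inner_self_eq_norm_sq,
      real_inner_comm x₁ x₂]
    nlinarith
  rcases (norm_nonneg (x₁ - x₂)).eq_or_lt with h0 | h0
  · rw [← h0]; simp
  · have := key.trans (real_inner_le_norm _ _)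
    refine le_of_mul_le_mul_right ?_ h0
    linarith [sq ‖x₁ - x₂‖]

lemma stretch_expand {E : Type*} [NormedAddCommGroup E] [InnerProductSpace ℝ E]
    {f : ℝ → ℝ} {δ k w : ℝ} (hf : ∀ s, 0 ≤ f s) (hδ : δ ≤ 1)
    (hanti : Antitone f) (hfδ : ∀ s t, s ≤ t → f s - f t ≤ (1 - δ) * (t - s))
    (hk : 0 ≤ k) (hk1 : k ≤ 1) (hw : 0 ≤ w) (x₁ x₂ : E) :
    δ * ‖x₁ - x₂‖ ≤ ‖stretch f k w ‖x₁‖ • x₁ - stretch f k w ‖x₂‖ • x₂‖ := by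
  apply inner_expand x₁ x₂ hδ (one_le_stretch hf hk _) (one_le_stretch hf hk _)
  rcases le_total ‖x₁‖ ‖x₂‖ with h | h
  · have := radial_expand hf hanti hfδ hk hk1 hw (norm_nonneg x₁) h
    nlinarith
  · have := radial_expand hf hanti hfδ hk hk1 hw (norm_nonneg x₂) h
    nlinarith

/-! ### Smoothness and the inverse function theorem -/

/-- A left inverse of a smooth map with injective derivative at `p` is smooth at the image of
`p`, as it agrees there with the local inverse of the inverse function theorem. -/
lemma contDiffAt_leftInverse {V : Type*} [NormedAddCommGroup V] [NormedSpace ℝ V]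
    [FiniteDimensional ℝ V] {Φ ψ : V → V} {A : Set V} (hA : IsOpen A) {p : V} (hp : p ∈ A)
    (hψ : Set.LeftInvOn ψ Φ A) (hΦ : ContDiffAt ℝ ∞ Φ p)
    (hinj : Function.Injective (fderiv ℝ Φ p)) : ContDiffAt ℝ ∞ ψ (Φ p) := by
  have : CompleteSpace V := FiniteDimensional.complete ℝ V
  let L : V ≃L[ℝ] V :=
    (LinearEquiv.ofInjectiveEndo (fderiv ℝ Φ p : V →ₗ[ℝ] V) hinj).toContinuousLinearEquiv
  have hL : HasFDerivAt Φ (L : V →L[ℝ] V) p := by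
    have h := (hΦ.differentiableAt (by simp)).hasFDerivAt
    convert h using 1
    ext v
    rfl
  have hstrict := hΦ.hasStrictFDerivAt' hL (by simp)
  have hloc := hΦ.to_localInverse hL (by simp)
  refine hloc.congr_of_eventuallyEq ?_
  have h1 := hstrict.eventually_right_inverse
  have h2 : ∀ᶠ z in nhds (Φ p), hstrict.localInverse Φ L p z ∈ A := by
    apply hstrict.localInverse_continuousAt.eventually_mem
    rw [hstrict.localInverse_apply_image]
    exact hA.mem_nhds hp
  filter_upwards [h1, h2] with z hz1 hz2
  have := hψ hz2
  rw [hz1] at this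
  exact this

lemma contDiffAt_comp_norm {E : Type*} [NormedAddCommGroup E] [InnerProductSpace ℝ E]
    {f : ℝ → ℝ} {c η : ℝ} (hη : 0 < η) (hf : ContDiff ℝ ∞ f) (hfc : ∀ s ≤ η, f s = c) (x : E) :
    ContDiffAt ℝ ∞ (fun x : E => f ‖x‖) x := by
  by_cases hx : x = 0
  · have : (fun x : E => f ‖x‖) =ᶠ[nhds x] fun _ => c := by
      filter_upwards [Metric.ball_mem_nhds x hη] with z hz
      subst hx
      exact hfc _ (mem_ball_zero_iff.1 hz).le
    exact contDiffAt_const.congr_of_eventuallyEq this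
  · exact hf.contDiffAt.comp x (contDiffAt_norm ℝ hx)

/-- If `Φ` preserves the second coordinate and expands distances on every slice `E × {y}` by a
factor `δ > 0`, its derivative is injective. -/
lemma fderiv_injective_of_slices {E F : Type*} [NormedAddCommGroup E] [NormedSpace ℝ E]
    [NormedAddCommGroup F] [NormedSpace ℝ F] {Φ : E × F → E × F} {δ : ℝ} (hδ : 0 < δ)
    (hsnd : ∀ p, (Φ p).2 = p.2)
    (hexp : ∀ x₁ x₂ y, δ * ‖x₁ - x₂‖ ≤ ‖(Φ (x₁, y)).1 - (Φ (x₂, y)).1‖)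
    {p : E × F} (hΦ : DifferentiableAt ℝ Φ p) : Function.Injective (fderiv ℝ Φ p) := by
  rw [injective_iff_map_eq_zero]
  rintro ⟨v, w⟩ h0
  have hw : w = 0 := by
    have h1 : HasFDerivAt (fun p => (Φ p).2)
        ((ContinuousLinearMap.snd ℝ E F).comp (fderiv ℝ Φ p)) p :=
      hΦ.hasFDerivAt.snd
    have h2 : HasFDerivAt (fun p => (Φ p).2) (ContinuousLinearMap.snd ℝ E F) p := by
      simp only [hsnd]; exact hasFDerivAt_snd
    have := congrArg (fun T => T (v, w)) (h1.unique h2)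
    simp only [ContinuousLinearMap.comp_apply, h0] at this
    simpa using this.symm
  subst hw
  -- the derivative along the line `t ↦ p + t (v, 0)` vanishes, but its difference quotients are
  -- bounded below by `δ ‖v‖`
  have hlim := hΦ.hasFDerivAt.hasLineDerivAt (v, 0)
  rw [h0] at hlim
  have ht := (hasDerivAt_iff_tendsto_slope_zero.1 hlim).norm
  have hbound : δ * ‖v‖ ≤ ‖(0 : E × F)‖ := by
    refine ge_of_tendsto ht ?_
    filter_upwards [self_mem_nhdsWithin] with t ht0
    have ht0 : t ≠ 0 := ht0
    have h := hexp (p.1 + t • v) p.1 p.2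
    have e : p + t • (v, (0 : F)) = (p.1 + t • v, p.2) := by ext <;> simp
    simp only [zero_add, zero_smul, add_zero, e]
    rw [norm_smul, norm_inv]
    have h' : δ * (‖t‖ * ‖v‖) ≤ ‖Φ (p.1 + t • v, p.2) - Φ p‖ := by
      rw [add_sub_cancel_left, norm_smul] at h
      exact h.trans (norm_fst_le (Φ (p.1 + t • v, p.2) - Φ p))
    have htp : 0 < ‖t‖ := norm_pos_iff.2 ht0
    rw [inv_mul_eq_div, le_div_iff₀ htp]
    linarith
  have : ‖v‖ = 0 := by
    rw [norm_zero] at hbound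
    nlinarith [norm_nonneg v]
  rw [norm_eq_zero.1 this]; rfl



/-! ### The diffeomorphism -/

open Set

/-- **Lemma.** With `A = (B_a × B'_b) ∖ ({0} × (B'_b ∖ B'_d))` and
`A' = A ∖ (C̄_c × S'_d)` in `ℝᵐ × ℝⁿ`, there are `ε > 0` and a diffeomorphism
`φ : A → A'` equal to the identity whenever `‖x‖ ≥ a - ε` or `‖y‖ ≥ b - ε`. -/
theorem exists_diffeo_removing_tube (m n : ℕ) (hm : 1 ≤ m) (hn : 1 ≤ n)
    (a b c d : ℝ) (hc : 0 < c) (hca : c < a) (hd : 0 < d) (hdb : d < b) :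
    ∃ ε > (0 : ℝ),
      ∃ φ ψ : EuclideanSpace ℝ (Fin m) × EuclideanSpace ℝ (Fin n) →
          EuclideanSpace ℝ (Fin m) × EuclideanSpace ℝ (Fin n),
        (let A : Set (EuclideanSpace ℝ (Fin m) × EuclideanSpace ℝ (Fin n)) :=
            (Metric.ball 0 a ×ˢ Metric.ball 0 b) \
              ({0} ×ˢ (Metric.ball (0 : EuclideanSpace ℝ (Fin n)) b \ Metric.ball 0 d));
         let A' : Set (EuclideanSpace ℝ (Fin m) × EuclideanSpace ℝ (Fin n)) :=
            A \ (Metric.closedBall 0 c ×ˢ Metric.sphere (0 : EuclideanSpace ℝ (Fin n)) d);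
         ContDiffOn ℝ (⊤ : ℕ∞) φ A ∧ ContDiffOn ℝ (⊤ : ℕ∞) ψ A' ∧
         Set.BijOn φ A A' ∧ Set.InvOn ψ φ A A' ∧
         ∀ p ∈ A, (a - ε ≤ ‖p.1‖ ∨ b - ε ≤ ‖p.2‖) → φ p = p) := by
  obtain ⟨f, δ, η, a₁, hδ, hδ1, hη, ha₁, hfs, hfc, hf0, hfnn, hanti, hfδ⟩ := exists_profile hc hca
  let K : ContDiffBump (0 : EuclideanSpace ℝ (Fin n)) :=
    { rIn := d
      rOut := (d + b) / 2
      rIn_pos := hd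
      rIn_lt_rOut := by linarith }
  have hK0 : ∀ y, 0 ≤ K y := fun y => K.nonneg
  have hK1 : ∀ y, K y ≤ 1 := fun y => K.le_one
  let w : EuclideanSpace ℝ (Fin n) → ℝ := fun y => (‖y‖ ^ 2 - d ^ 2) ^ 2
  have hw0 : ∀ y, 0 ≤ w y := fun y => sq_nonneg _
  have hwd : ∀ y, ‖y‖ ≠ d → 0 < w y := by
    intro y hy
    have : ‖y‖ ^ 2 - d ^ 2 ≠ 0 := by
      intro h
      exact hy ((pow_left_inj₀ (norm_nonneg y) hd.le two_ne_zero).1 (by linarith))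
    positivity
  let Φ : EuclideanSpace ℝ (Fin m) × EuclideanSpace ℝ (Fin n) →
      EuclideanSpace ℝ (Fin m) × EuclideanSpace ℝ (Fin n) :=
    fun p => (stretch f (K p.2) (w p.2) ‖p.1‖ • p.1, p.2)
  have hexp : ∀ x₁ x₂ y, δ * ‖x₁ - x₂‖ ≤ ‖(Φ (x₁, y)).1 - (Φ (x₂, y)).1‖ := fun x₁ x₂ y =>
    stretch_expand hfnn hδ1 hanti hfδ (hK0 y) (hK1 y) (hw0 y) x₁ x₂
  have hone : ∀ y s, 1 ≤ stretch f (K y) (w y) s := fun y s => one_le_stretch hfnn (hK0 y) s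
  have hsm : ∀ p, (p.1 ≠ 0 ∨ ‖p.2‖ ≠ d) → ContDiffAt ℝ ∞ Φ p := by
    intro p hp
    have hpos : ‖p.1‖ ^ 2 + (‖p.2‖ ^ 2 - d ^ 2) ^ 2 ≠ 0 := by
      rcases hp with hp | hp
      · have := norm_pos_iff.2 hp
        positivity
      · have := hwd _ hp
        simp only [w] at this
        positivity
    have h1 : ContDiffAt ℝ ∞ (fun p : EuclideanSpace ℝ (Fin m) × EuclideanSpace ℝ (Fin n) =>
        √(‖p.1‖ ^ 2 + (‖p.2‖ ^ 2 - d ^ 2) ^ 2)) p := by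
      refine ContDiffAt.sqrt ?_ hpos
      exact ((contDiff_fst.norm_sq ℝ).add
        (((contDiff_snd.norm_sq ℝ).sub contDiff_const).pow 2)).contDiffAt
    have h2 : ContDiffAt ℝ ∞ (fun p : EuclideanSpace ℝ (Fin m) × EuclideanSpace ℝ (Fin n) =>
        f ‖p.1‖) p :=
      (contDiffAt_comp_norm hη hfs hfc p.1).comp p contDiffAt_fst
    have h3 : ContDiffAt ℝ ∞ (fun p : EuclideanSpace ℝ (Fin m) × EuclideanSpace ℝ (Fin n) =>
        K p.2) p := K.contDiff.contDiffAt.comp p contDiffAt_snd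
    exact ((contDiffAt_const.add ((h3.mul h2).div h1 (Real.sqrt_ne_zero'.2
      (lt_of_le_of_ne (by positivity) hpos.symm)))).smul contDiffAt_fst).prodMk contDiffAt_snd
  refine ⟨min (a - a₁) ((b - d) / 2), lt_min (by linarith) (by linarith), Φ, ?_⟩
  set A : Set (EuclideanSpace ℝ (Fin m) × EuclideanSpace ℝ (Fin n)) :=
    (Metric.ball 0 a ×ˢ Metric.ball 0 b) \
      ({0} ×ˢ (Metric.ball (0 : EuclideanSpace ℝ (Fin n)) b \ Metric.ball 0 d)) with hAdef
  have hA : ∀ x y, (x, y) ∈ A ↔ ‖x‖ < a ∧ ‖y‖ < b ∧ (x ≠ 0 ∨ ‖y‖ < d) := by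
    intro x y
    simp only [hAdef, Set.mem_sdiff, Set.mem_prod, mem_ball_zero_iff, Set.mem_singleton_iff]
    constructor
    · rintro ⟨⟨h1, h2⟩, h3⟩
      refine ⟨h1, h2, ?_⟩
      by_contra! h
      exact h3 ⟨h.1, h2, not_lt.2 h.2⟩
    · rintro ⟨h1, h2, h3⟩
      refine ⟨⟨h1, h2⟩, ?_⟩
      rintro ⟨h4, -, h5⟩
      exact h3.elim (fun h => h h4) h5
  have hAopen : IsOpen A := by
    have : A = {p | ‖p.1‖ < a} ∩ ({p | ‖p.2‖ < b} ∩ ({p | p.1 ≠ 0} ∪ {p | ‖p.2‖ < d})) := by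
      ext ⟨x, y⟩; exact hA x y
    rw [this]
    exact (isOpen_lt (by fun_prop) (by fun_prop)).inter
      ((isOpen_lt (by fun_prop) (by fun_prop)).inter
        ((isOpen_ne_fun (by fun_prop) (by fun_prop)).union
          (isOpen_lt (by fun_prop) (by fun_prop))))
  have hsmA : ∀ p ∈ A, ContDiffAt ℝ ∞ Φ p := by
    rintro ⟨x, y⟩ hp
    exact hsm _ (((hA x y).1 hp).2.2.imp id ne_of_lt)
  set A' : Set (EuclideanSpace ℝ (Fin m) × EuclideanSpace ℝ (Fin n)) :=
    A \ (Metric.closedBall 0 c ×ˢ Metric.sphere (0 : EuclideanSpace ℝ (Fin n)) d) with hA'def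
  have hA' : ∀ x y, (x, y) ∈ A' ↔ (x, y) ∈ A ∧ (‖y‖ = d → c < ‖x‖) := by
    intro x y
    simp only [hA'def, Set.mem_sdiff, Set.mem_prod, mem_closedBall_zero_iff, mem_sphere_zero_iff_norm]
    refine and_congr_right fun _ => ⟨fun h hy => ?_, fun h hxy => ?_⟩
    · by_contra! hx
      exact h ⟨hx, hy⟩
    · exact absurd (h hxy.2) (not_lt.2 hxy.1)
  -- on the sphere `‖y‖ = d` the radial map is `s ↦ s + f s`
  have hrad : ∀ y s, ‖y‖ = d → 0 < s → s * stretch f (K y) (w y) s = s + f s := by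
    intro y s hy hs
    have hk : K y = 1 := K.one_of_mem_closedBall (by
      rw [mem_closedBall_zero_iff]; exact hy.le)
    have hw : w y = 0 := by simp [w, hy]
    rw [stretch, hk, hw, add_zero, Real.sqrt_sq hs.le]
    field_simp
  have hnorm : ∀ x y, ‖(Φ (x, y)).1‖ = ‖x‖ * stretch f (K y) (w y) ‖x‖ := by
    intro x y
    simp only [Φ]
    rw [norm_smul, Real.norm_of_nonneg (zero_le_one.trans (hone _ _)), mul_comm]
  have hstra : ∀ y, stretch f (K y) (w y) a = 1 := by
    intro y; simp [stretch, hf0 a ha₁.le]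
  have hbij : Set.BijOn Φ A A' := by
    refine ⟨?_, ?_, ?_⟩
    · rintro ⟨x, y⟩ hp
      obtain ⟨h1, h2, h3⟩ := (hA x y).1 hp
      refine (hA' _ _).2 ⟨(hA _ _).2 ⟨?_, h2, ?_⟩, ?_⟩
      · have := radial_expand hfnn hanti hfδ (hK0 y) (hK1 y) (hw0 y) (norm_nonneg x) h1.le
        rw [hstra] at this
        change ‖(Φ (x, y)).1‖ < a
        rw [hnorm]
        nlinarith
      · refine h3.imp (fun hx => ?_) id
        exact smul_ne_zero (zero_lt_one.trans_le (hone _ _)).ne' hx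
      · intro hy
        have hx : 0 < ‖x‖ := norm_pos_iff.2 (h3.resolve_right (not_lt.2 (ge_of_eq hy)))
        change c < ‖(Φ (x, y)).1‖
        rw [hnorm, hrad y _ hy hx]
        have := hfδ 0 ‖x‖ hx.le
        rw [hfc 0 hη.le] at this
        nlinarith
    · rintro ⟨x₁, y⟩ - ⟨x₂, y₂⟩ - h
      have hy : y = y₂ := congrArg Prod.snd h
      subst hy
      have h1 := hexp x₁ x₂ y
      rw [h, sub_self, norm_zero] at h1
      have : ‖x₁ - x₂‖ = 0 := by nlinarith [norm_nonneg (x₁ - x₂)]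
      rw [sub_eq_zero.1 (norm_eq_zero.1 this)]
    · rintro ⟨x, y⟩ hp
      obtain ⟨hpA, hpc⟩ := (hA' x y).1 hp
      obtain ⟨h1, h2, h3⟩ := (hA x y).1 hpA
      by_cases hx : x = 0
      · exact ⟨(x, y), hpA, by simp [Φ, hx]⟩
      have hxp : 0 < ‖x‖ := norm_pos_iff.2 hx
      have ha : 0 ≤ a := (hc.trans hca).le
      obtain ⟨s, hs0, hsa, hs⟩ : ∃ s, 0 < s ∧ s < a ∧ s * stretch f (K y) (w y) s = ‖x‖ := by
        by_cases hy : ‖y‖ = d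
        · have hcont : ContinuousOn (fun s => s + f s) (Set.Icc 0 a) :=
            (continuous_id.add hfs.continuous).continuousOn
          -- `s + f s` runs from `c` to `a`, and `c < ‖x‖` because `(x, y)` is off the tube
          obtain ⟨s, hs, hse⟩ := intermediate_value_Ioo ha hcont (show ‖x‖ ∈ _ from
            ⟨by simpa [hfc 0 hη.le] using hpc hy, by simpa [hf0 a ha₁.le] using h1⟩)
          exact ⟨s, hs.1, hs.2, by rw [hrad y s hy hs.1]; exact hse⟩
        · have hcont : ContinuousOn (fun s => s * stretch f (K y) (w y) s) (Set.Icc 0 a) := by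
            apply Continuous.continuousOn
            unfold stretch
            have hwy := hwd y hy
            refine continuous_id.mul (continuous_const.add
              ((continuous_const.mul hfs.continuous).div (by fun_prop) fun s => ?_))
            positivity
          obtain ⟨s, hs, hse⟩ := intermediate_value_Ioo ha hcont (show ‖x‖ ∈ _ from
            ⟨by simpa using hxp, by simpa [hstra] using h1⟩)
          exact ⟨s, hs.1, hs.2, hse⟩
      have hns : ‖(s / ‖x‖) • x‖ = s := by
        rw [norm_smul, Real.norm_of_nonneg (by positivity)]
        field_simp
      refine ⟨((s / ‖x‖) • x, y), (hA _ _).2 ⟨by rwa [hns], h2, Or.inl ?_⟩, ?_⟩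
      · exact smul_ne_zero (by positivity) hx
      · simp only [Φ, hns, smul_smul]
        rw [← mul_div_assoc, mul_comm _ s, hs, div_self hxp.ne', one_smul]
  have hinv := hbij.invOn_invFunOn
  refine ⟨Function.invFunOn Φ A, fun p hp => (hsmA p hp).contDiffWithinAt, ?_, hbij, hinv, ?_⟩
  · intro z hz
    obtain ⟨p, hp, rfl⟩ := hbij.surjOn hz
    exact (contDiffAt_leftInverse hAopen hp hinv.1 (hsmA p hp)
      (fderiv_injective_of_slices (Φ := Φ) hδ (fun _ => rfl) hexp
        ((hsmA p hp).differentiableAt (by simp)))).contDiffWithinAt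
  · rintro ⟨x, y⟩ hp h
    have hz : K y * f ‖x‖ = 0 := by
      rcases h with h | h
      · have := min_le_left (a - a₁) ((b - d) / 2)
        rw [hf0 ‖x‖ (by simp only at h; linarith), mul_zero]
      · have := min_le_right (a - a₁) ((b - d) / 2)
        rw [K.zero_of_le_dist (by
          rw [dist_zero_right]; simp only at h; change (d + b) / 2 ≤ ‖y‖; linarith), zero_mul]
    simp [Φ, stretch, hz]
end

section
/- Let m ≥ 1 and let 0 < c < a be real numbers. Then there exist ε with 0 < ε < (a−c)/2 and a smooth vector field X on the open set B_a ∖ {0} ⊆ ℝᵐ such that: (1) X vanishes identically on B_a ∖ B_{a−2ε}; (2) for every x ∈ B_a ∖ {0} the integral curve of X starting at x exists and stays in B_a ∖ {0} for all t ∈ [0,1]; and (3) the time-one flow map Φ₁ maps B_a ∖ {0} onto B_a ∖ C̄_c, where C̄_c is the closed ball of radius c centered at the origin. -/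
/-!
The field is radial, `X x = g (‖x‖²) / (2 ‖x‖²) • x`, where `g` is `c²` times a smooth bump function
equal to `1` on `[0, p]` and to `0` on `[q, ∞)`, with `c² < p < q = ((a + c) / 2)²` (so that
`ε = (a - c) / 4`). Along an integral curve the squared norm `ρ` satisfies the scalar equation
`ρ' = g ρ`, and the direction `x / ‖x‖` is constant. So everything reduces to showing that the
time-one flow of `ρ' = g ρ` maps `(0, a²)` onto `(c², a²)` (`exists_radial_flow`).

The function `g` is bounded and Lipschitz, so by Picard-Lindelöf (`exists_scalar_solution`) solutions
exist on `[0, 1]` with a value prescribed at either end. They are nondecreasing, and they stay below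
`a²` because `g` vanishes from `q < a²` on. Since `ρ' = c²` while `ρ ≤ p`, a solution starting at a
positive value exceeds `c²` at time `1` (`scalar_lower`). Conversely a solution ending at `y > c²`
starts at a value at least `y - c² > 0`, because `g ≤ c²`; this gives surjectivity.
-/

open Set

/-- Global existence on `[0, 1]` for a bounded Lipschitz scalar autonomous equation, with the value
prescribed at an arbitrary time `t₀`. -/
lemma exists_scalar_solution {g : ℝ → ℝ} {K : NNReal} (hK : LipschitzWith K g) {C : ℝ} (hC : 0 ≤ C)
    (h0 : ∀ r, 0 ≤ g r) (h1 : ∀ r, g r ≤ C) (t₀ : Icc (0 : ℝ) 1) (y : ℝ) :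
    ∃ α : ℝ → ℝ, α t₀ = y ∧
      ∀ t ∈ Icc (0 : ℝ) 1, HasDerivWithinAt α (g (α t)) (Icc (0 : ℝ) 1) t := by
  have h : IsPicardLindelof (fun _ : ℝ => g) t₀ y ⟨C, hC⟩ 0 ⟨C, hC⟩ K :=
    { lipschitzOnWith := fun _ _ => hK.lipschitzOnWith
      continuousOn := fun _ _ => continuousOn_const
      norm_le := fun _ _ x _ => by
        rw [Real.norm_of_nonneg (h0 x)]; exact h1 x
      mul_max_le := by
        have ht := t₀.2
        have : max ((1 : ℝ) - t₀) (t₀ - 0) ≤ 1 := max_le (by linarith [ht.1]) (by linarith [ht.2])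
        have h2 := mul_le_mul_of_nonneg_left this hC
        change C * max ((1 : ℝ) - t₀) (t₀ - 0) ≤ C - 0
        linarith }
  exact h.exists_eq_forall_mem_Icc_hasDerivWithinAt₀

lemma hasDerivWithinAt_Ici_of_Icc {α : ℝ → ℝ} {d t : ℝ} (ht : t ∈ Ico (0 : ℝ) 1)
    (h : HasDerivWithinAt α d (Icc (0 : ℝ) 1) t) : HasDerivWithinAt α d (Ici t) t :=
  h.mono_of_mem_nhdsWithin (Filter.mem_of_superset (Icc_mem_nhdsGE ht.2)
    (Icc_subset_Icc_left ht.1))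

lemma scalar_monotone {g α : ℝ → ℝ} (h0 : ∀ r, 0 ≤ g r)
    (hα : ∀ t ∈ Icc (0 : ℝ) 1, HasDerivWithinAt α (g (α t)) (Icc (0 : ℝ) 1) t) :
    MonotoneOn α (Icc 0 1) :=
  monotoneOn_of_hasDerivWithinAt_nonneg (f' := fun t => g (α t)) (convex_Icc 0 1)
    (fun t ht => (hα t ht).continuousWithinAt)
    (fun t ht => (hα t (interior_subset ht)).mono interior_subset) (fun _ _ => h0 _)

/-- A solution moves by at most `C` in unit time. -/
lemma scalar_displacement {g α : ℝ → ℝ} {C : ℝ} (h1 : ∀ r, g r ≤ C)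
    (hα : ∀ t ∈ Icc (0 : ℝ) 1, HasDerivWithinAt α (g (α t)) (Icc (0 : ℝ) 1) t) :
    α 1 ≤ α 0 + C := by
  have hd : ∀ t ∈ Icc (0 : ℝ) 1,
      HasDerivWithinAt (fun t => C * t - α t) (C * 1 - g (α t)) (Icc (0 : ℝ) 1) t := fun t ht =>
    ((hasDerivWithinAt_id t _).const_mul C).sub (hα t ht)
  have h := monotoneOn_of_hasDerivWithinAt_nonneg (f' := fun t => C * 1 - g (α t))
    (convex_Icc (0 : ℝ) 1) (fun t ht => (hd t ht).continuousWithinAt)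
    (fun t ht => (hd t (interior_subset ht)).mono interior_subset)
    (fun t _ => by linarith [h1 (α t)])
  have := h (left_mem_Icc.2 zero_le_one) (right_mem_Icc.2 zero_le_one) zero_le_one
  simp only at this
  linarith

/-- A solution starting below `A` stays below `A`, as `g` vanishes from `q < A` on. The barrier is
a line of small positive slope starting at height `max (α 0) q`. -/
lemma scalar_upper {g α : ℝ → ℝ} {q A : ℝ} (hqA : q < A) (hq : ∀ r, q ≤ r → g r = 0)
    (hα : ∀ t ∈ Icc (0 : ℝ) 1, HasDerivWithinAt α (g (α t)) (Icc (0 : ℝ) 1) t)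
    (hA : α 0 < A) : ∀ t ∈ Icc (0 : ℝ) 1, α t < A := by
  set M := max (α 0) q with hM
  have hMA : M < A := max_lt hA hqA
  set η := (A - M) / 2 with hη
  have hη0 : 0 < η := by linarith
  have hb := image_le_of_deriv_right_lt_deriv_boundary (f := α) (f' := fun t => g (α t))
    (a := 0) (b := 1) (B := fun t => M + η * t) (B' := fun _ => η * 1)
    (fun t ht => (hα t ht).continuousWithinAt)
    (fun t ht => hasDerivWithinAt_Ici_of_Icc ht (hα t (Ico_subset_Icc_self ht)))
    (by simp [hM])
    (fun t => ((hasDerivAt_id t).const_mul η).const_add M)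
    (fun t ht heq => by
      have hqt : q ≤ α t := by
        have := le_max_right (α 0) q
        have := mul_nonneg hη0.le ht.1
        linarith
      simpa [hq _ hqt] using hη0)
  intro t ht
  have h := hb ht
  nlinarith [ht.2]

/-- A solution starting at a positive value is beyond `C` at time one, as it moves at speed `C`
while in `[0, p]`. The barrier is the line from `μ = min (α 0) (p - C)` at time `0` to `C + μ / 2`
at time `1`, which stays in `[0, p]` and has slope less than `C`. -/
lemma scalar_lower {g α : ℝ → ℝ} {C p : ℝ} (hC : 0 ≤ C) (hCp : C < p)
    (hp : ∀ r, 0 ≤ r → r ≤ p → g r = C)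
    (hα : ∀ t ∈ Icc (0 : ℝ) 1, HasDerivWithinAt α (g (α t)) (Icc (0 : ℝ) 1) t)
    (h0 : 0 < α 0) : C < α 1 := by
  set μ := min (α 0) (p - C) with hμ
  have hμ0 : 0 < μ := lt_min h0 (by linarith)
  have hμp : μ ≤ p - C := min_le_right _ _
  have hb := image_le_of_deriv_right_lt_deriv_boundary (f := fun t => -α t)
    (f' := fun t => -g (α t))
    (a := 0) (b := 1) (B := fun t => -μ + (μ / 2 - C) * t) (B' := fun _ => (μ / 2 - C) * 1)
    (fun t ht => (hα t ht).continuousWithinAt.neg)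
    (fun t ht => (hasDerivWithinAt_Ici_of_Icc ht (hα t (Ico_subset_Icc_self ht))).neg)
    (by simp [hμ])
    (fun t => ((hasDerivAt_id t).const_mul _).const_add _)
    (fun t ht heq => by
      have e : α t = μ * (1 - t / 2) + C * t := by linarith
      have h1 : 0 ≤ α t := by
        rw [e]
        exact add_nonneg (mul_nonneg hμ0.le (by linarith [ht.2])) (mul_nonneg hC ht.1)
      have h2 : α t ≤ p := by
        rw [e]; nlinarith [ht.1, ht.2]
      rw [hp _ h1 h2]
      linarith)
  have h := hb (right_mem_Icc.2 zero_le_one)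
  linarith

/-- The scalar equation `ρ' = g ρ` has a flow on `(0, A)`, with time-one map onto `(C, A)`. -/
lemma exists_radial_flow {g : ℝ → ℝ} {K : NNReal} (hK : LipschitzWith K g) {C p q A : ℝ}
    (hC : 0 ≤ C) (hCp : C < p) (hqA : q < A)
    (h0 : ∀ r, 0 ≤ g r) (h1 : ∀ r, g r ≤ C)
    (hp : ∀ r, 0 ≤ r → r ≤ p → g r = C) (hq : ∀ r, q ≤ r → g r = 0) :
    ∃ φ : ℝ → ℝ → ℝ,
      (∀ r ∈ Ioo 0 A, φ r 0 = r ∧ ∀ t ∈ Icc (0 : ℝ) 1, φ r t ∈ Ioo 0 A ∧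
        HasDerivWithinAt (φ r) (g (φ r t)) (Icc (0 : ℝ) 1) t) ∧
      (∀ r ∈ Ioo 0 A, C < φ r 1) ∧ ∀ y ∈ Ioo C A, ∃ r ∈ Ioo 0 A, φ r 1 = y := by
  have hz : (0 : ℝ) ∈ Icc (0 : ℝ) 1 := left_mem_Icc.2 zero_le_one
  have ho : (1 : ℝ) ∈ Icc (0 : ℝ) 1 := right_mem_Icc.2 zero_le_one
  choose φ hφ0 hφ using exists_scalar_solution hK hC h0 h1 ⟨0, hz⟩
  simp only at hφ0
  refine ⟨φ, fun r hr => ⟨hφ0 r, fun t ht => ⟨⟨?_, ?_⟩, hφ r t ht⟩⟩, fun r hr => ?_, fun y hy => ?_⟩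
  · have := scalar_monotone h0 (hφ r) hz ht ht.1
    rw [hφ0 r] at this
    exact hr.1.trans_le this
  · exact scalar_upper hqA hq (hφ r) ((hφ0 r).trans_lt hr.2) t ht
  · exact scalar_lower hC hCp hp (hφ r) (hr.1.trans_eq (hφ0 r).symm)
  · obtain ⟨β, hβ1, hβ⟩ := exists_scalar_solution hK hC h0 h1 ⟨1, ho⟩ y
    simp only at hβ1
    have hm := scalar_monotone h0 hβ hz ho zero_le_one
    have hd := scalar_displacement h1 hβ
    rw [hβ1] at hm hd
    refine ⟨β 0, ⟨by linarith [hy.1], hm.trans_lt hy.2⟩, ?_⟩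
    have := ODE_solution_unique (v := fun _ => g) (fun _ => hK)
      (fun t ht => (hφ (β 0) t ht).continuousWithinAt)
      (fun t ht => hasDerivWithinAt_Ici_of_Icc ht (hφ (β 0) t (Ico_subset_Icc_self ht)))
      (fun t ht => (hβ t ht).continuousWithinAt)
      (fun t ht => hasDerivWithinAt_Ici_of_Icc ht (hβ t (Ico_subset_Icc_self ht)))
      (hφ0 (β 0))
    rw [this ho, hβ1]

/-- The cut-off speed: `C` on `[0, p]` and `0` on `[q, ∞)`. -/
lemma exists_speed {C p q : ℝ} (hC : 0 ≤ C) (hp0 : 0 < p) (hpq : p < q) :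
    ∃ (g : ℝ → ℝ) (K : NNReal), ContDiff ℝ (⊤ : ℕ∞) g ∧ LipschitzWith K g ∧
      (∀ r, 0 ≤ g r) ∧ (∀ r, g r ≤ C) ∧
      (∀ r, 0 ≤ r → r ≤ p → g r = C) ∧ ∀ r, q ≤ r → g r = 0 := by
  let b : ContDiffBump (0 : ℝ) := ⟨p, q, hp0, hpq⟩
  have hs : ContDiff ℝ (⊤ : ℕ∞) (fun r => C * b r) := contDiff_const.mul b.contDiff
  obtain ⟨K, hK⟩ := ContDiff.lipschitzWith_of_hasCompactSupport
    (f := fun r => C * b r) b.hasCompactSupport.mul_left hs (by simp)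
  refine ⟨_, K, hs, hK, fun r => mul_nonneg hC b.nonneg,
    fun r => mul_le_of_le_one_right hC b.le_one, fun r h h' => ?_, fun r h => ?_⟩
  · rw [b.one_of_mem_closedBall, mul_one]
    simpa [abs_of_nonneg h] using h'
  · rw [b.zero_of_le_dist, mul_zero]
    simpa using h.trans (le_abs_self r)

/-- **Lemma.** For `0 < c < a` there are `0 < ε < (a-c)/2` and a smooth vector field `X` on
`B_a ∖ {0} ⊆ ℝᵐ`, vanishing on `B_a ∖ B_{a-2ε}`, whose flow is defined on `[0,1]` and stays in
`B_a ∖ {0}`, and whose time-one map sends `B_a ∖ {0}` onto `B_a ∖ C̄_c`. -/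
theorem exists_field_flow_onto_ball_diff_closedBall (m : ℕ) (hm : 1 ≤ m)
    (a c : ℝ) (hc : 0 < c) (hca : c < a) :
    ∃ ε : ℝ, 0 < ε ∧ ε < (a - c) / 2 ∧
      ∃ X : EuclideanSpace ℝ (Fin m) → EuclideanSpace ℝ (Fin m),
        ContDiffOn ℝ (⊤ : ℕ∞) X (Metric.ball (0 : EuclideanSpace ℝ (Fin m)) a \ {0}) ∧
        (∀ x ∈ Metric.ball (0 : EuclideanSpace ℝ (Fin m)) a \ Metric.ball 0 (a - 2 * ε),
          X x = 0) ∧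
        ∃ γ : EuclideanSpace ℝ (Fin m) → ℝ → EuclideanSpace ℝ (Fin m),
          (∀ x ∈ Metric.ball (0 : EuclideanSpace ℝ (Fin m)) a \ {0},
            γ x 0 = x ∧
            ∀ t ∈ Set.Icc (0 : ℝ) 1,
              γ x t ∈ Metric.ball (0 : EuclideanSpace ℝ (Fin m)) a \ {0} ∧
              HasDerivWithinAt (γ x) (X (γ x t)) (Set.Icc (0 : ℝ) 1) t) ∧
          (fun x => γ x 1) '' (Metric.ball (0 : EuclideanSpace ℝ (Fin m)) a \ {0}) =
            Metric.ball (0 : EuclideanSpace ℝ (Fin m)) a \ Metric.closedBall 0 c := by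
  have hC : 0 < c ^ 2 := by positivity
  have hCq : c ^ 2 < ((a + c) / 2) ^ 2 := by nlinarith
  have hqA : ((a + c) / 2) ^ 2 < a ^ 2 := by nlinarith
  obtain ⟨p, hCp, hpq⟩ := exists_between hCq
  obtain ⟨g, K, hg, hK, h0, h1, hp, hq⟩ := exists_speed hC.le (hC.trans hCp) hpq
  obtain ⟨φ, hφ, hφlow, hφsurj⟩ := exists_radial_flow hK hC.le hCp hqA h0 h1 hp hq
  have hmem : ∀ x : EuclideanSpace ℝ (Fin m), x ∈ Metric.ball (0 : EuclideanSpace ℝ (Fin m)) a \ {0} →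
      0 < ‖x‖ ∧ ‖x‖ ^ 2 ∈ Ioo 0 (a ^ 2) := by
    rintro x ⟨hxa, hx0⟩
    have hpos : 0 < ‖x‖ := norm_pos_iff.2 hx0
    have hxa' : ‖x‖ < a := mem_ball_zero_iff.1 hxa
    exact ⟨hpos, by positivity, by gcongr⟩
  -- The norm of a point obtained from `x` by changing its squared norm to `s`.
  have hnorm : ∀ (x : EuclideanSpace ℝ (Fin m)) (s : ℝ), 0 < ‖x‖ →
      ‖(√s / ‖x‖) • x‖ = √s := fun x s hx => by
    rw [norm_smul, Real.norm_of_nonneg (by positivity), div_mul_cancel₀ _ hx.ne']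
  refine ⟨(a - c) / 4, by linarith, by linarith,
    fun x => (g (‖x‖ ^ 2) / (2 * ‖x‖ ^ 2)) • x, ?_, ?_,
    fun x t => (√(φ (‖x‖ ^ 2) t) / ‖x‖) • x, ?_, ?_⟩
  · have hn : ContDiff ℝ (⊤ : ℕ∞) (fun x : EuclideanSpace ℝ (Fin m) => ‖x‖ ^ 2) :=
      contDiff_norm_sq ℝ
    refine ContDiffOn.smul (ContDiffOn.div (hg.comp hn).contDiffOn
      (contDiff_const.mul hn).contDiffOn fun x hx => ?_) contDiffOn_id
    have := (hmem x hx).1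
    positivity
  · rintro x ⟨-, hx⟩
    have hx' : (a + c) / 2 ≤ ‖x‖ := by
      have : a - 2 * ((a - c) / 4) ≤ ‖x‖ := by simpa using hx
      linarith
    have : ((a + c) / 2) ^ 2 ≤ ‖x‖ ^ 2 := pow_le_pow_left₀ (by linarith) hx' 2
    simp [hq _ this]
  · intro x hx
    obtain ⟨hpos, hxI⟩ := hmem x hx
    obtain ⟨hi, hflow⟩ := hφ _ hxI
    refine ⟨?_, fun t ht => ?_⟩
    · simp only [hi, Real.sqrt_sq hpos.le, div_self hpos.ne', one_smul]
    · obtain ⟨hI, hd⟩ := hflow t ht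
      have hs : 0 < √(φ (‖x‖ ^ 2) t) := Real.sqrt_pos.2 hI.1
      have hn := hnorm x (φ (‖x‖ ^ 2) t) hpos
      refine ⟨⟨?_, ?_⟩, ?_⟩
      · rw [mem_ball_zero_iff, hn]
        exact (Real.sqrt_lt' (by linarith)).2 hI.2
      · rw [mem_singleton_iff, ← norm_eq_zero, hn]
        exact hs.ne'
      · have hd' := ((hd.sqrt hI.1.ne').div_const ‖x‖).smul_const x
        refine hd'.congr_deriv (Eq.symm ?_)
        beta_reduce
        rw [hn, Real.sq_sqrt hI.1.le, smul_smul]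
        congr 1
        -- `√s` is the only root left; eliminate `s` in favour of its square root.
        have hsq := Real.sq_sqrt hI.1.le
        generalize g (φ (‖x‖ ^ 2) t) = G
        generalize √(φ (‖x‖ ^ 2) t) = s at *
        rw [← hsq]
        field_simp
  · ext y
    constructor
    · rintro ⟨x, hx, rfl⟩
      obtain ⟨hpos, hxI⟩ := hmem x hx
      have hI := ((hφ _ hxI).2 1 (right_mem_Icc.2 zero_le_one)).1
      have hlow := hφlow _ hxI
      simp only [mem_sdiff, mem_ball_zero_iff, mem_closedBall_zero_iff, hnorm x _ hpos, not_le]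
      exact ⟨(Real.sqrt_lt' (by linarith)).2 hI.2, Real.lt_sqrt_of_sq_lt hlow⟩
    · rintro ⟨hya, hyc⟩
      have hya' : ‖y‖ < a := by simpa using hya
      have hyc' : c < ‖y‖ := by simpa using hyc
      have hy0 : 0 < ‖y‖ := hc.trans hyc'
      obtain ⟨r, hr, hry⟩ := hφsurj (‖y‖ ^ 2) ⟨by gcongr, by gcongr⟩
      have hsr : 0 < √r := Real.sqrt_pos.2 hr.1
      have hn := hnorm y r hy0
      -- The preimage of `y` lies on the same ray, at squared radius `r`.
      refine ⟨(√r / ‖y‖) • y, ⟨?_, ?_⟩, ?_⟩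
      · rw [mem_ball_zero_iff, hn]
        exact (Real.sqrt_lt' (by linarith)).2 hr.2
      · rw [mem_singleton_iff, ← norm_eq_zero, hn]
        exact hsr.ne'
      · simp only [hn, Real.sq_sqrt hr.1.le, hry, Real.sqrt_sq hy0.le, smul_smul]
        rw [div_mul_div_cancel₀ hsr.ne', div_self hy0.ne', one_smul]
end
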